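/- For positive integers n, m, k with k ≥ 1, the number of ways of expressing n as a sum modulo m of k integers from the set {0,1,...,m-1} (repetitions allowed, order disregarded) equals (1/m) · Σ_{d | gcd(m,k)} binom((m+k-d)/d, k/d) · C_d(n), where C_d(n) = Σ_{j: gcd(j,d)=1, 1≤j≤d} e^{2πijn/d} is the Ramanujan sum. -/

import Mathlib

open Finset

/-- The Ramanujan sum `C_d(n) = Σ_{1 ≤ j ≤ d, gcd(j,d)=1} e^{2πijn/d}`. -/
noncomputable def ramanujanSum (d n : ℕ) : ℂ :=
  ∑ j ∈ (Finset.Icc 1 d).filter (fun j => Nat.Coprime j d),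
    Complex.exp (2 * Real.pi * Complex.I * j * n / d)

lemma vs_char (m : ℕ) [NeZero m] (ζ : ℂ) (h : ζ ^ m = 1) (s : Multiset (ZMod m)) :
    (s.map (fun j => ζ ^ j.val)).prod = ζ ^ s.sum.val := by
  induction s using Multiset.induction with
  | empty => simp
  | cons a s ih =>
    rw [Multiset.map_cons, Multiset.prod_cons, ih, Multiset.sum_cons, ZMod.val_add, ← pow_add,
      ← pow_mod_orderOf ζ (a.val + s.sum.val), ← pow_mod_orderOf ζ ((a.val + s.sum.val) % m),
      Nat.mod_mod_of_dvd _ (orderOf_dvd_of_pow_eq_one h)]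

lemma vs_prod_range (ζ : ℂ) (d : ℕ) (hd : 0 < d) (h : IsPrimitiveRoot ζ d) :
    ∏ j ∈ range d, (1 - PowerSeries.C (ζ ^ j) * PowerSeries.X : PowerSeries ℂ) =
      1 - PowerSeries.X ^ d := by
  have h' : IsPrimitiveRoot (PowerSeries.C ζ : PowerSeries ℂ) d :=
    h.map_of_injective PowerSeries.C_injective
  have := h'.pow_sub_pow_eq_prod_sub_mul 1 PowerSeries.X hd
  rw [one_pow] at this
  rw [this]
  refine Finset.prod_bij (fun j _ => (PowerSeries.C ζ) ^ j) ?_ ?_ ?_ ?_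
  · intro j _
    rw [Polynomial.mem_nthRootsFinset hd, ← pow_mul, mul_comm, pow_mul, h'.pow_eq_one, one_pow]
  · intro a ha b hb hab
    exact h'.pow_inj (by simpa using ha) (by simpa using hb) hab
  · intro b hb
    have : NeZero d := ⟨hd.ne'⟩
    obtain ⟨i, hi, rfl⟩ := h'.eq_pow_of_pow_eq_one ((Polynomial.mem_nthRootsFinset hd 1).1 hb)
    exact ⟨i, by simpa using hi, rfl⟩
  · intro j _
    simp

lemma vs_prod_range_mul (ζ : ℂ) (d e : ℕ) (hd : 0 < d) (h : IsPrimitiveRoot ζ d) :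
    ∏ j ∈ range (d * e), (1 - PowerSeries.C (ζ ^ j) * PowerSeries.X : PowerSeries ℂ) =
      (1 - PowerSeries.X ^ d) ^ e := by
  induction e with
  | zero => simp
  | succ e ih =>
    rw [Nat.mul_succ, prod_range_add, ih, pow_succ, ← vs_prod_range ζ d hd h]
    congr 1
    refine prod_congr rfl fun j _ => ?_
    rw [pow_add, pow_mul, h.pow_eq_one, one_pow, one_mul]

lemma vs_prod_zmod (m : ℕ) [NeZero m] (ζ : ℂ) (d e : ℕ) (hd : 0 < d) (h : IsPrimitiveRoot ζ d)
    (hm : m = d * e) :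
    ∏ j : ZMod m, (1 - PowerSeries.C (ζ ^ j.val) * PowerSeries.X : PowerSeries ℂ) =
      (1 - PowerSeries.X ^ d) ^ e := by
  rw [← vs_prod_range_mul ζ d e hd h, ← hm]
  refine Finset.prod_bij (fun j _ => j.val) ?_ ?_ ?_ ?_
  · intro j _; simpa using j.val_lt
  · intro a _ b _ hab; exact ZMod.val_injective m hab
  · intro b hb; exact ⟨b, mem_univ _, ZMod.val_cast_of_lt (by simpa using hb)⟩
  · intro j _; rfl

lemma vs_gen {α : Type*} [Fintype α] [DecidableEq α] (f : α → ℂ) (k : ℕ) :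
    ∑ s : Sym α k, ((s : Multiset α).map f).prod =
      PowerSeries.coeff k (∏ a : α, PowerSeries.mk fun i => f a ^ i) := by
  rw [PowerSeries.coeff_prod]
  refine Finset.sum_bij (fun s _ => Multiset.toFinsupp (s : Multiset α)) ?_ ?_ ?_ ?_
  · intro s _
    rw [mem_finsuppAntidiag]
    refine ⟨?_, subset_univ _⟩
    change ∑ a, Multiset.count a (s : Multiset α) = k
    rw [Multiset.sum_count_eq_card (fun a _ => mem_univ a)]
    exact s.2
  · intro a _ b _ hab
    exact Sym.coe_injective (Multiset.toFinsupp.injective hab)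
  · intro b hb
    rw [mem_finsuppAntidiag] at hb
    refine ⟨⟨Finsupp.toMultiset b, ?_⟩, mem_univ _, ?_⟩
    · rw [Finsupp.card_toMultiset, Finsupp.sum_fintype _ _ (by simp)]; exact hb.1
    · exact Finsupp.toMultiset_toFinsupp b
  · intro s _
    simp only [PowerSeries.coeff_mk, Multiset.toFinsupp_apply]
    rw [Finset.prod_multiset_map_count]
    exact Finset.prod_subset (subset_univ _) (by intro x _ hx; simp at hx; simp [hx])

lemma vs_geom (c : ℂ) : (PowerSeries.mk fun i => c ^ i) * (1 - PowerSeries.C c * PowerSeries.X) = 1 := by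
  ext n
  rw [mul_sub, mul_one, mul_left_comm]
  cases n with
  | zero => simp
  | succ n => 
    rw [map_sub, PowerSeries.coeff_C_mul, PowerSeries.coeff_succ_mul_X]
    simp [PowerSeries.coeff_one, pow_succ']

lemma vs_inner (m k : ℕ) [NeZero m] (ζ : ℂ) (d e : ℕ) (hd : 0 < d) (h : IsPrimitiveRoot ζ d)
    (hm : m = d * e) :
    ∑ s : Sym (ZMod m) k, ζ ^ (s : Multiset (ZMod m)).sum.val =
      if d ∣ k then (((m + k - d) / d).choose (k / d) : ℂ) else 0 := by
  have hm0 := NeZero.ne m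
  have h1 : ζ ^ m = 1 := by rw [hm, pow_mul, h.pow_eq_one, one_pow]
  simp_rw [← vs_char m ζ h1]
  rw [vs_gen]
  obtain ⟨e, rfl⟩ : ∃ e', e = e' + 1 := Nat.exists_eq_succ_of_ne_zero (by rintro rfl; simp at hm; omega)
  set Q : PowerSeries ℂ := PowerSeries.expand d hd.ne' (PowerSeries.mk fun n => ((e + n).choose e : ℂ)) with hQ
  have hQ1 : Q * (1 - PowerSeries.X ^ d) ^ (e + 1) = 1 := by
    have := congrArg (PowerSeries.expand d hd.ne') (PowerSeries.mk_add_choose_mul_one_sub_pow_eq_one ℂ e)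
    simpa [hQ] using this
  have hP : (∏ a : ZMod m, PowerSeries.mk fun i => (ζ ^ a.val) ^ i) * (1 - PowerSeries.X ^ d) ^ (e + 1) = 1 := by
    rw [← vs_prod_zmod m ζ d (e+1) hd h hm, ← prod_mul_distrib]
    exact prod_eq_one fun a _ => vs_geom _
  have hPQ : (∏ a : ZMod m, PowerSeries.mk fun i => (ζ ^ a.val) ^ i) = Q := by
    have h0 : (1 - PowerSeries.X ^ d : PowerSeries ℂ) ^ (e + 1) ≠ 0 := right_ne_zero_of_mul_eq_one hQ1
    exact mul_right_cancel₀ h0 (hP.trans hQ1.symm)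
  rw [hPQ, hQ]
  split_ifs with hk
  · obtain ⟨q, rfl⟩ := hk
    rw [PowerSeries.coeff_expand_mul, PowerSeries.coeff_mk]
    have : (m + d * q - d) = d * (e + q) := by rw [hm, Nat.sub_eq_iff_eq_add (by nlinarith)]; ring
    rw [this, Nat.mul_div_cancel_left _ hd, Nat.mul_div_cancel_left _ hd, Nat.choose_symm_add]
  · exact PowerSeries.coeff_expand_of_not_dvd _ _ _ hk

lemma vs_orth (m n : ℕ) [NeZero m] (ω : ℂ) (h : IsPrimitiveRoot ω m) (x : ZMod m) :
    ∑ a ∈ Icc 1 m, ω ^ (a * n) * ((ω⁻¹) ^ a) ^ x.val = if x = (n : ZMod m) then (m : ℂ) else 0 := by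
  have hω : ω ≠ 0 := h.ne_zero (NeZero.ne m)
  set η := ω ^ n * (ω⁻¹) ^ x.val with hη
  have e1 : ∀ a, ω ^ (a * n) * ((ω⁻¹) ^ a) ^ x.val = η ^ a := by
    intro a; rw [hη, mul_pow, ← pow_mul, ← pow_mul, ← pow_mul, mul_comm a n, mul_comm a x.val]
  simp_rw [e1]
  have hηm : η ^ m = 1 := by
    rw [hη, mul_pow, ← pow_mul, ← pow_mul, mul_comm n, mul_comm x.val, pow_mul, pow_mul, h.pow_eq_one, inv_pow,
      h.pow_eq_one]; simp
  have key : η = 1 ↔ x = (n : ZMod m) := by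
    rw [hη, inv_pow, mul_inv_eq_one₀ (pow_ne_zero _ hω), (isOfFinOrder_iff_pow_eq_one.2 ⟨m, NeZero.pos m, h.pow_eq_one⟩).pow_eq_pow_iff_modEq, ← h.eq_orderOf,
      ← ZMod.natCast_eq_natCast_iff, ZMod.natCast_zmod_val, eq_comm]
  split_ifs with hx
  · rw [key.2 hx]; simp
  · have hne : η ≠ 1 := fun h => hx (key.1 h)
    have e2 : ∑ a ∈ Icc 1 m, η ^ a = η * ∑ a ∈ range m, η ^ a := by
      rw [mul_sum, Finset.range_eq_Ico, ← Finset.Ico_add_one_right_eq_Icc, ← Finset.sum_Ico_add' _ 0 m 1]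
      simp [pow_succ']
    rw [e2, geom_sum_eq hne, hηm]; simp

lemma vs_regroup (m : ℕ) (hm : 0 < m) (F : ℕ → ℕ → ℂ) :
    ∑ a ∈ Icc 1 m, F (m / Nat.gcd a m) a =
      ∑ d ∈ m.divisors, ∑ j ∈ (Icc 1 d).filter (fun j => Nat.Coprime j d), F d (j * (m / d)) := by
  rw [Finset.sum_sigma']
  symm
  have hg : ∀ d e j, 0 < d * e → Nat.Coprime j d → Nat.gcd (j * e) (d * e) = e := by
    intro d e j _ hj; rw [Nat.gcd_mul_right, hj.gcd_eq_one, one_mul]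
  refine Finset.sum_bij' (fun x _ => x.2 * (m / x.1)) (fun a _ => ⟨m / Nat.gcd a m, a / Nat.gcd a m⟩) ?_ ?_ ?_ ?_ ?_
  · rintro ⟨d, j⟩ h
    simp only [mem_sigma, Nat.mem_divisors, mem_filter, mem_Icc] at h ⊢
    obtain ⟨⟨⟨e, rfl⟩, h0⟩, ⟨h1, h2⟩, h3⟩ := h
    have hd : 0 < d := by omega
    have he : 0 < e := Nat.pos_of_mul_pos_left hm
    rw [Nat.mul_div_cancel_left _ hd]
    exact ⟨Nat.mul_pos h1 he, Nat.mul_le_mul_right _ h2⟩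
  · intro a h
    simp only [mem_sigma, Nat.mem_divisors, mem_filter, mem_Icc] at h ⊢
    have hgp : 0 < Nat.gcd a m := Nat.gcd_pos_of_pos_left _ h.1
    exact ⟨⟨Nat.div_dvd_of_dvd (Nat.gcd_dvd_right _ _), hm.ne'⟩,
      ⟨Nat.div_pos (Nat.gcd_le_left _ h.1) hgp, Nat.div_le_div_right h.2⟩,
      Nat.coprime_div_gcd_div_gcd hgp⟩
  · rintro ⟨d, j⟩ h
    simp only [mem_sigma, Nat.mem_divisors, mem_filter, mem_Icc] at h ⊢
    obtain ⟨⟨⟨e, rfl⟩, h0⟩, ⟨h1, h2⟩, h3⟩ := h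
    have hd : 0 < d := by omega
    have he : 0 < e := Nat.pos_of_mul_pos_left hm
    rw [Nat.mul_div_cancel_left _ hd, hg d e j hm h3, Nat.mul_div_cancel _ he, Nat.mul_div_cancel _ he]
  · intro a h
    simp only [mem_Icc] at h ⊢
    have hgp : 0 < Nat.gcd a m := Nat.gcd_pos_of_pos_left _ h.1
    rw [Nat.div_div_self (Nat.gcd_dvd_right _ _) hm.ne', Nat.div_mul_cancel (Nat.gcd_dvd_left _ _)]
  · rintro ⟨d, j⟩ h
    simp only [mem_sigma, Nat.mem_divisors, mem_filter, mem_Icc] at h ⊢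
    obtain ⟨⟨⟨e, rfl⟩, h0⟩, ⟨h1, h2⟩, h3⟩ := h
    have hd : 0 < d := by omega
    have he : 0 < e := Nat.pos_of_mul_pos_left hm
    rw [Nat.mul_div_cancel_left _ hd, hg d e j hm h3, Nat.mul_div_cancel _ he]

/-- Von Sterneck's formula: the number of multisets of size `k` of elements of `ℤ/mℤ`
whose sum is `n` equals `(1/m) Σ_{d | gcd(m,k)} binom((m+k-d)/d, k/d) C_d(n)`. -/
theorem von_sterneck (n m k : ℕ) (hm : 0 < m) (hk : 1 ≤ k) :
    (Nat.card {s : Sym (ZMod m) k // (s : Multiset (ZMod m)).sum = (n : ZMod m)} : ℂ) =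
      (1 / m) * ∑ d ∈ (Nat.gcd m k).divisors,
        (Nat.choose ((m + k - d) / d) (k / d) : ℂ) * ramanujanSum d n := by
  have : NeZero m := ⟨hm.ne'⟩
  have hmC : (m : ℂ) ≠ 0 := Nat.cast_ne_zero.2 hm.ne'
  set ω : ℂ := Complex.exp (2 * Real.pi * Complex.I / m) with hω
  have hprim : IsPrimitiveRoot ω m := Complex.isPrimitiveRoot_exp m hm.ne'
  have hcount : (m : ℂ) * (Nat.card {s : Sym (ZMod m) k // (s : Multiset (ZMod m)).sum = (n : ZMod m)} : ℂ)
      = ∑ s : Sym (ZMod m) k, ∑ a ∈ Icc 1 m,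
        ω ^ (a * n) * ((ω⁻¹) ^ a) ^ (s : Multiset (ZMod m)).sum.val := by
    simp_rw [vs_orth m n ω hprim]
    rw [← Finset.sum_filter, Finset.sum_const, Nat.card_eq_fintype_card, Fintype.card_subtype,
      nsmul_eq_mul, mul_comm]
  rw [one_div, eq_inv_mul_iff_mul_eq₀ hmC, hcount, Finset.sum_comm]
  have h2 : ∀ a ∈ Icc 1 m, ∑ s : Sym (ZMod m) k,
        ω ^ (a * n) * ((ω⁻¹) ^ a) ^ (s : Multiset (ZMod m)).sum.val =
        (fun d a => ω ^ (a * n) * if d ∣ k then (((m + k - d) / d).choose (k / d) : ℂ) else 0)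
          (m / Nat.gcd a m) a := by
    intro a ha
    rw [mem_Icc] at ha
    have hgp : 0 < Nat.gcd a m := Nat.gcd_pos_of_pos_left _ ha.1
    have hd : 0 < m / Nat.gcd a m := Nat.div_pos (Nat.gcd_le_right _ hm) hgp
    rw [← mul_sum, vs_inner m k _ (m / Nat.gcd a m) (Nat.gcd a m) hd ?_
      (Nat.div_mul_cancel (Nat.gcd_dvd_right _ _)).symm]
    rw [IsPrimitiveRoot.iff_orderOf, orderOf_pow' _ (by omega), ← hprim.inv.eq_orderOf, Nat.gcd_comm]
  rw [Finset.sum_congr rfl h2, vs_regroup m hm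
    (fun d a => ω ^ (a * n) * if d ∣ k then (((m + k - d) / d).choose (k / d) : ℂ) else 0)]
  have h3 : (Nat.gcd m k).divisors = m.divisors.filter (· ∣ k) := by
    ext d; simp [Nat.mem_divisors, Nat.dvd_gcd_iff, hm.ne']
  rw [h3, Finset.sum_filter]
  refine Finset.sum_congr rfl fun d hd => ?_
  obtain ⟨⟨e, he⟩, -⟩ := Nat.mem_divisors.1 hd
  have hd0 : 0 < d := Nat.pos_of_mem_divisors hd
  split_ifs with hdk
  · rw [ramanujanSum, mul_sum]
    refine Finset.sum_congr rfl fun j _ => ?_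
    rw [mul_comm]
    congr 1
    rw [hω, ← Complex.exp_nat_mul]
    congr 1
    have hq : m / d = e := by rw [he, Nat.mul_div_cancel_left _ hd0]
    have hdC : (d : ℂ) ≠ 0 := Nat.cast_ne_zero.2 hd0.ne'
    have hmde : (m : ℂ) = d * e := by rw [he]; push_cast; rfl
    have heC : (e : ℂ) ≠ 0 := by rintro h; rw [h, mul_zero] at hmde; exact hmC hmde
    rw [hq, hmde]
    push_cast
    field_simp
  · simp
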